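/- Let A be an n×n real symmetric matrix with entries a_{ij}. For every real x ≥ 0 and every eigenvalue λ of A, one has λ ≥ min_{1≤i≤n} d_i(A,x), where d_i(A,x) = a_{ii} − x − Σ_{j≠i} |a_{ij} − x|. In particular λ_min(A) ≥ sup_{x≥0} min_i d_i(A,x) (the shifted Gershgorin lower bound). -/

import Mathlib

/-- The shifted Gershgorin row function d_i(A,x) = a_{ii} − x − Σ_{j≠i} |a_{ij} − x|. -/
noncomputable def gershLower (n : ℕ) (A : Matrix (Fin n) (Fin n) ℝ) (x : ℝ) (i : Fin n) : ℝ :=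
  A i i - x - ∑ j ∈ Finset.univ.erase i, |A i j - x|

/-!
Write `J` for the all-ones matrix. The numbers `d_i(A, x)` are the left endpoints of the Gershgorin
intervals of `A - x J`, so by Gershgorin's theorem `min_i d_i(A, x)` bounds the spectrum of
`A - x J` from below. As `x J` is positive semidefinite, `A - x J ≤ A` in the Loewner order, and
lower bounds of the spectrum are monotone in that order. Only the positivity of `x J` matters, so
any positive semidefinite shift works.
-/

namespace ShiftedGershgorin

open Matrix
open scoped ComplexOrder MatrixOrder

theorem lowerBounds_spectrum_mono {R : Type*} [Ring R] [StarRing R] [PartialOrder R]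
    [StarOrderedRing R] [TopologicalSpace R] [Algebra ℝ R]
    [ContinuousFunctionalCalculus ℝ R IsSelfAdjoint] [NonnegSpectrumClass ℝ R] {a b : R}
    (ha : IsSelfAdjoint a) (hab : a ≤ b) :
    lowerBounds (spectrum ℝ a) ⊆ lowerBounds (spectrum ℝ b) := by
  intro c hc
  have hca : algebraMap ℝ R c ≤ a := algebraMap_le_of_le_spectrum (fun _ h ↦ hc h) ha
  exact (algebraMap_le_iff_le_spectrum (.of_ge hab ha)).mp (hca.trans hab)

theorem posSemidef_const {ι R : Type*} [Finite ι] [CommRing R] [PartialOrder R] [StarRing R]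
    [StarOrderedRing R] {c : R} (hc : 0 ≤ c) : (of fun _ _ : ι ↦ c).PosSemidef := by
  have hJ : (of fun _ _ : ι ↦ c) = c • vecMulVec 1 (star 1) := by
    ext i j
    simp
  exact hJ ▸ (posSemidef_vecMulVec_self_star 1).smul hc

variable {ι 𝕜 : Type*} [RCLike 𝕜] [Fintype ι] [DecidableEq ι]

/-- The least real part in the Gershgorin disc of the `i`-th row of `B`: its centre is `B i i` and
its radius is the sum of the norms of the off-diagonal entries of that row. -/
noncomputable def discLower (B : Matrix ι ι 𝕜) (i : ι) : ℝ :=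
  RCLike.re (B i i) - ∑ j ∈ Finset.univ.erase i, ‖B i j‖

theorem exists_discLower_le_re {B : Matrix ι ι 𝕜} {μ : 𝕜} (hμ : μ ∈ spectrum 𝕜 B) :
    ∃ i, discLower B i ≤ RCLike.re μ := by
  rw [← spectrum_toLin', ← Module.End.hasEigenvalue_iff_mem_spectrum] at hμ
  obtain ⟨i, hi⟩ := eigenvalue_mem_ball hμ
  refine ⟨i, sub_le_comm.mp ?_⟩
  calc RCLike.re (B i i) - RCLike.re μ = RCLike.re (B i i - μ) := (map_sub _ _ _).symm
    _ ≤ ‖B i i - μ‖ := RCLike.re_le_norm _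
    _ ≤ ∑ j ∈ Finset.univ.erase i, ‖B i j‖ := mem_closedBall_iff_norm'.mp hi

theorem iInf_discLower_le_of_mem_spectrum {B : Matrix ι ι 𝕜} {μ : ℝ} (hμ : μ ∈ spectrum ℝ B) :
    ⨅ i, discLower B i ≤ μ := by
  obtain ⟨i, hi⟩ := exists_discLower_le_re (spectrum.algebraMap_mem 𝕜 hμ)
  exact (ciInf_le (Set.finite_range _).bddBelow i).trans (by simpa using hi)

theorem iInf_discLower_sub_le_of_mem_spectrum {A P : Matrix ι ι 𝕜} (hA : A.IsHermitian)
    (hP : P.PosSemidef) {μ : ℝ} (hμ : μ ∈ spectrum ℝ A) : ⨅ i, discLower (A - P) i ≤ μ :=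
  lowerBounds_spectrum_mono (hA.sub hP.isHermitian) (sub_le_self A hP.nonneg)
    (fun _ ↦ iInf_discLower_le_of_mem_spectrum) hμ

theorem gershLower_eq_discLower {n : ℕ} (A : Matrix (Fin n) (Fin n) ℝ) (x : ℝ) :
    gershLower n A x = discLower (A - of fun _ _ ↦ x) :=
  rfl

end ShiftedGershgorin

open ShiftedGershgorin ComplexOrder in
theorem shifted_gershgorin_lower_general {ι κ 𝕜 : Type*} [Fintype ι] [DecidableEq ι] [Nonempty ι]
    [Nonempty κ] [RCLike 𝕜] {A : Matrix ι ι 𝕜} (hA : A.IsHermitian) {P : κ → Matrix ι ι 𝕜}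
    (hP : ∀ k, (P k).PosSemidef) :
    (∀ k, ∀ μ ∈ spectrum ℝ A, ⨅ i, discLower (A - P k) i ≤ μ) ∧
    ⨆ k, ⨅ i, discLower (A - P k) i ≤ ⨅ i, hA.eigenvalues i :=
  have bound (k : κ) {μ : ℝ} : μ ∈ spectrum ℝ A → ⨅ i, discLower (A - P k) i ≤ μ :=
    iInf_discLower_sub_le_of_mem_spectrum hA (hP k)
  ⟨fun k _ ↦ bound k, ciSup_le fun k ↦ le_ciInf fun i ↦
    bound k (hA.eigenvalues_mem_spectrum_real i)⟩

/-- For every x ≥ 0, every eigenvalue of a real symmetric matrix A is at least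
min_i d_i(A,x); in particular λ_min(A) ≥ sup_{x ≥ 0} min_i d_i(A,x). -/
theorem shifted_gershgorin_lower (n : ℕ) (hn : 0 < n)
    (A : Matrix (Fin n) (Fin n) ℝ) (hA : A.IsHermitian) :
    (∀ x : ℝ, 0 ≤ x → ∀ μ ∈ spectrum ℝ A, (⨅ i, gershLower n A x i) ≤ μ) ∧
    (⨆ x : {x : ℝ // 0 ≤ x}, ⨅ i, gershLower n A x.1 i) ≤ ⨅ i, hA.eigenvalues i := by
  have : Nonempty (Fin n) := ⟨⟨0, hn⟩⟩
  simpa only [Subtype.forall, ShiftedGershgorin.gershLower_eq_discLower] using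
    shifted_gershgorin_lower_general hA fun x : {x : ℝ // 0 ≤ x} ↦
      ShiftedGershgorin.posSemidef_const x.2
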